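/- Let T ≥ 0 and σ_L < 0 be real numbers, and let x, y, z : ℝ → ℝ be differentiable functions whose derivatives are continuous on the interval [0, T]. Suppose that for all t ∈ [0, T], σ_L * Real.sqrt ((deriv x t)^2 + (deriv y t)^2) ≤ deriv z t. Then z 0 − z T ≤ (−σ_L) * ∫ t in 0..T, Real.sqrt ((deriv x t)^2 + (deriv y t)^2 + (deriv z t)^2). -/

import Mathlib

theorem stmt_18 (T σL : ℝ) (hT : 0 ≤ T) (hσ : σL < 0)
    (x y z : ℝ → ℝ)
    (hx : Differentiable ℝ x) (hy : Differentiable ℝ y) (hz : Differentiable ℝ z)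
    (hx' : ContinuousOn (deriv x) (Set.Icc 0 T))
    (hy' : ContinuousOn (deriv y) (Set.Icc 0 T))
    (hz' : ContinuousOn (deriv z) (Set.Icc 0 T))
    (hsteep : ∀ t ∈ Set.Icc 0 T,
      σL * Real.sqrt ((deriv x t) ^ 2 + (deriv y t) ^ 2) ≤ deriv z t) :
    z 0 - z T ≤
      (-σL) * ∫ t in (0 : ℝ)..T,
        Real.sqrt ((deriv x t) ^ 2 + (deriv y t) ^ 2 + (deriv z t) ^ 2) := by
  have hspeed : ContinuousOn
      (fun t => Real.sqrt ((deriv x t) ^ 2 + (deriv y t) ^ 2 + (deriv z t) ^ 2))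
      (Set.Icc 0 T) :=
    (((hx'.pow 2).add (hy'.pow 2)).add (hz'.pow 2)).sqrt
  have hz_int : IntervalIntegrable (deriv z) MeasureTheory.volume 0 T :=
    hz'.intervalIntegrable_of_Icc hT
  have hdrop : ∫ t in (0 : ℝ)..T, -deriv z t = z 0 - z T := by
    rw [intervalIntegral.integral_neg,
      intervalIntegral.integral_deriv_eq_sub (fun t _ => hz t) hz_int, neg_sub]
  rw [← hdrop, ← intervalIntegral.integral_const_mul]
  refine intervalIntegral.integral_mono_on hT hz_int.neg
    ((hspeed.intervalIntegrable_of_Icc hT).const_mul _) fun t ht => ?_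
  have hle : Real.sqrt ((deriv x t) ^ 2 + (deriv y t) ^ 2) ≤
      Real.sqrt ((deriv x t) ^ 2 + (deriv y t) ^ 2 + (deriv z t) ^ 2) :=
    Real.sqrt_le_sqrt (le_add_of_nonneg_right (sq_nonneg _))
  have hmul := mul_le_mul_of_nonneg_left hle (neg_nonneg.mpr hσ.le)
  linarith [hsteep t ht]
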